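/- arXiv:1708.03403 — 4 statements merged into one kernel-verified Lean document; each statement's English description precedes it below -/
import Mathlib

section
/- The spi-logic axiomatised by the empty set of sp-implications is complete: for every sp-implication ι of signature 𝓡, ι is validated by every frame of signature 𝓡 if and only if ι is validated by every SLO of signature 𝓡. -/
/-- Strictly positive modal formulas over a signature `Sig`:
propositional variables, `⊤`, conjunction, and a diamond `◇_r` for each `r : Sig`. -/
inductive SP (Sig : Type) : Type
  | var : ℕ → SP Sig
  | top : SP Sig
  | and : SP Sig → SP Sig → SP Sig
  | dia : Sig → SP Sig → SP Sig

/-- An sp-implication `σ → τ` is a pair of sp-formulas. -/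
abbrev SPImp (Sig : Type) := SP Sig × SP Sig

/-- A SLO of signature `Sig`: a meet-semilattice with a greatest element,
equipped with a monotone unary operator for each element of the signature. -/
structure SLO (Sig : Type) where
  carrier : Type
  [instInf : SemilatticeInf carrier]
  [instTop : OrderTop carrier]
  dia : Sig → carrier → carrier
  mono : ∀ r : Sig, Monotone (dia r)

attribute [instance] SLO.instInf SLO.instTop

namespace SLO

variable {Sig : Type}

/-- Evaluation of an sp-formula in a SLO under a valuation of the variables. -/
def eval (A : SLO Sig) (v : ℕ → A.carrier) : SP Sig → A.carrier
  | .var n => v n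
  | .top => ⊤
  | .and φ ψ => eval A v φ ⊓ eval A v ψ
  | .dia r φ => A.dia r (eval A v φ)

/-- A SLO validates an sp-implication `σ → τ` if under every valuation
the value of `σ` is below the value of `τ`. -/
def Valid (A : SLO Sig) (ι : SPImp Sig) : Prop :=
  ∀ v : ℕ → A.carrier, eval A v ι.1 ≤ eval A v ι.2

/-- A SLO validates a set of sp-implications. -/
def ValidSet (A : SLO Sig) (Ax : Set (SPImp Sig)) : Prop :=
  ∀ ι ∈ Ax, Valid A ι

end SLO

/-- A Kripke frame: a nonempty type of worlds with a binary accessibility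
relation for each element of the signature. -/
structure KFrame (Sig : Type) where
  world : Type
  [instNonempty : Nonempty world]
  rel : Sig → world → world → Prop

attribute [instance] KFrame.instNonempty

namespace KFrame

variable {Sig : Type}

/-- Truth of an sp-formula at a world of a Kripke model `(F, v)`. -/
def truth (F : KFrame Sig) (v : ℕ → Set F.world) : SP Sig → F.world → Prop
  | .var n, w => w ∈ v n
  | .top, _ => True
  | .and φ ψ, w => truth F v φ w ∧ truth F v ψ w
  | .dia r φ, w => ∃ u, F.rel r w u ∧ truth F v φ u

/-- A frame validates an sp-implication `σ → τ` if in every Kripke model on it,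
at every world, truth of `σ` implies truth of `τ`. -/
def Valid (F : KFrame Sig) (ι : SPImp Sig) : Prop :=
  ∀ (v : ℕ → Set F.world) (w : F.world), truth F v ι.1 w → truth F v ι.2 w

/-- A frame validates a set of sp-implications. -/
def ValidSet (F : KFrame Sig) (Ax : Set (SPImp Sig)) : Prop :=
  ∀ ι ∈ Ax, Valid F ι

/-- The complex algebra `F*` of a frame, as a SLO: all subsets of the worlds,
with intersection as meet, the whole set as `⊤`, and
`◇_r X = {w | ∃ u ∈ X, rel r w u}`. -/
def cmpl (F : KFrame Sig) : SLO Sig where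
  carrier := Set F.world
  dia r X := {w | ∃ u ∈ X, F.rel r w u}
  mono r := by
    intro X Y hXY w hw
    obtain ⟨u, hu, hr⟩ := hw
    exact ⟨u, hXY hu, hr⟩

end KFrame

/-- An sp-embedding between SLOs: an injective map preserving `⊤`,
binary meets, and each operator. -/
def IsSpEmbedding {Sig : Type} (A B : SLO Sig) (η : A.carrier → B.carrier) : Prop :=
  Function.Injective η ∧ η ⊤ = ⊤ ∧
    (∀ a b : A.carrier, η (a ⊓ b) = η a ⊓ η b) ∧
    ∀ (r : Sig) (a : A.carrier), η (A.dia r a) = B.dia r (η a)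

/-- `Ax ⊨_Kr ι`: every frame validating every member of `Ax` validates `ι`. -/
def KrCons {Sig : Type} (Ax : Set (SPImp Sig)) (ι : SPImp Sig) : Prop :=
  ∀ F : KFrame Sig, F.ValidSet Ax → F.Valid ι

/-- `Ax ⊨_SLO ι`: every SLO validating every member of `Ax` validates `ι`. -/
def SLOCons {Sig : Type} (Ax : Set (SPImp Sig)) (ι : SPImp Sig) : Prop :=
  ∀ A : SLO Sig, A.ValidSet Ax → A.Valid ι

/-- The spi-logic axiomatised by `Ax` is complete:
`Ax ⊨_Kr ι` iff `Ax ⊨_SLO ι` for every sp-implication `ι`. -/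
def IsCompleteLogic {Sig : Type} (Ax : Set (SPImp Sig)) : Prop :=
  ∀ ι : SPImp Sig, KrCons Ax ι ↔ SLOCons Ax ι

/-- The spi-logic axiomatised by `Ax` is complex: every SLO validating every
member of `Ax` sp-embeds into the complex algebra of some frame validating
every member of `Ax`. -/
def IsComplexLogic {Sig : Type} (Ax : Set (SPImp Sig)) : Prop :=
  ∀ A : SLO Sig, A.ValidSet Ax →
    ∃ F : KFrame Sig, F.ValidSet Ax ∧
      ∃ η : A.carrier → (KFrame.cmpl F).carrier, IsSpEmbedding A (KFrame.cmpl F) η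

/-- The unimodal diamond. -/
def SP.d (φ : SP Unit) : SP Unit := SP.dia () φ

/-- `p → ◇p` (reflexivity). -/
def e_refl : SPImp Unit := (SP.var 0, (SP.var 0).d)

/-- `◇◇p → ◇p` (transitivity). -/
def e_trans : SPImp Unit := (((SP.var 0).d).d, (SP.var 0).d)

/-- `q ∧ ◇p → ◇(p ∧ ◇q)` (symmetry). -/
def e_sym : SPImp Unit :=
  ((SP.var 1).and ((SP.var 0).d), ((SP.var 0).and ((SP.var 1).d)).d)

/-!
Every SLO `A` sp-embeds into the complex algebra of a frame: let the worlds be the elements of `A`,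
let `a` see `b` when `a ≤ ◇ b`, and send `a` to its principal down-set. Monotonicity of `◇` is
exactly what makes this map commute with the diamonds. So the logic of the empty set is complex,
and complex logics are complete because validity passes from a SLO to its sp-subalgebras.
-/

section

variable {Sig : Type}

namespace KFrame

variable (F : KFrame Sig)

theorem cmpl_eval (v : ℕ → Set F.world) (φ : SP Sig) :
    F.cmpl.eval v φ = {w | F.truth v φ w} := by
  induction φ with
  | var n => rfl
  | top => rfl
  | and φ ψ ihφ ihψ => exact congrArg₂ (· ⊓ ·) ihφ ihψ
  | dia r φ ih =>
    exact (congrArg (F.cmpl.dia r) ih).trans (Set.ext fun _ => exists_congr fun _ => and_comm)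

theorem cmpl_valid_iff {ι : SPImp Sig} : F.cmpl.Valid ι ↔ F.Valid ι := by
  refine forall_congr' fun v : ℕ → Set F.world => ?_
  rw [F.cmpl_eval v, F.cmpl_eval v]
  exact Set.ofPred_subset_ofPred

theorem cmpl_validSet_iff {Ax : Set (SPImp Sig)} : F.cmpl.ValidSet Ax ↔ F.ValidSet Ax :=
  forall₂_congr fun _ _ => F.cmpl_valid_iff

end KFrame

theorem SLOCons.krCons {Ax : Set (SPImp Sig)} {ι : SPImp Sig} (h : SLOCons Ax ι) : KrCons Ax ι :=
  fun F hF => F.cmpl_valid_iff.1 (h F.cmpl (F.cmpl_validSet_iff.2 hF))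

namespace IsSpEmbedding

variable {A B : SLO Sig} {η : A.carrier → B.carrier}

theorem map_eval (hη : IsSpEmbedding A B η) (v : ℕ → A.carrier) (φ : SP Sig) :
    η (A.eval v φ) = B.eval (η ∘ v) φ := by
  obtain ⟨-, map_top, map_inf, map_dia⟩ := hη
  induction φ with
  | var n => rfl
  | top => exact map_top
  | and φ ψ ihφ ihψ => rw [SLO.eval, map_inf, ihφ, ihψ, SLO.eval]
  | dia r φ ih => rw [SLO.eval, map_dia, ih, SLO.eval]

theorem map_le_map_iff (hη : IsSpEmbedding A B η) {a b : A.carrier} : η a ≤ η b ↔ a ≤ b := by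
  obtain ⟨injective, -, map_inf, -⟩ := hη
  rw [← inf_eq_left, ← map_inf, injective.eq_iff, inf_eq_left]

theorem valid (hη : IsSpEmbedding A B η) {ι : SPImp Sig} (hB : B.Valid ι) : A.Valid ι := by
  intro v
  rw [← hη.map_le_map_iff, hη.map_eval, hη.map_eval]
  exact hB (η ∘ v)

end IsSpEmbedding

theorem IsComplexLogic.isCompleteLogic {Ax : Set (SPImp Sig)} (hAx : IsComplexLogic Ax) :
    IsCompleteLogic Ax := by
  refine fun ι => ⟨fun hKr A hA => ?_, SLOCons.krCons⟩
  obtain ⟨F, hF, η, hη⟩ := hAx A hA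
  exact hη.valid (F.cmpl_valid_iff.2 (hKr F hF))

namespace SLO

/-- The canonical frame of a SLO, whose complex algebra contains a copy of the SLO: its worlds are
all the elements, and `a` sees `b` along `r` if `a ≤ ◇_r b`. -/
def canonicalFrame (A : SLO Sig) : KFrame Sig where
  world := A.carrier
  instNonempty := ⟨⊤⟩
  rel r a b := a ≤ A.dia r b

theorem Iic_dia (A : SLO Sig) (r : Sig) (a : A.carrier) :
    Set.Iic (A.dia r a) = {b | ∃ c ∈ Set.Iic a, b ≤ A.dia r c} := by
  ext b
  constructor
  · intro hb
    exact ⟨a, Set.self_mem_Iic, hb⟩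
  · rintro ⟨c, hca, hbc⟩
    exact hbc.trans (A.mono r hca)

theorem isSpEmbedding_Iic (A : SLO Sig) :
    IsSpEmbedding A A.canonicalFrame.cmpl (Set.Iic : A.carrier → Set A.carrier) :=
  ⟨Set.Iic_injective, Set.Iic_top, fun _ _ => Set.Iic_inter_Iic.symm, A.Iic_dia⟩

end SLO

theorem isComplexLogic_empty : IsComplexLogic (∅ : Set (SPImp Sig)) :=
  fun A _ => ⟨A.canonicalFrame, fun _ h => h.elim, Set.Iic, A.isSpEmbedding_Iic⟩

end

/-- The spi-logic axiomatised by the empty set of sp-implications is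
complete: for every sp-implication `ι`, `ι` is validated by every frame iff it is
validated by every SLO. -/
theorem spi_empty_complete {Sig : Type} : IsCompleteLogic (∅ : Set (SPImp Sig)) := by
  exact isComplexLogic_empty.isCompleteLogic
end

section
/- The unimodal spi-logic axiomatised by {e_fun}, where e_fun = (◇p ∧ ◇q → ◇(p ∧ q)), is complex (and hence complete): every SLO validating e_fun admits an sp-embedding into F* for some frame F with a functional relation (i.e., satisfying ∀x,y,z (R(x,y) ∧ R(x,z) → y = z); equivalently, some frame validating e_fun). -/
/-- `◇p ∧ ◇q → ◇(p ∧ q)` (functionality). -/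
def e_fun : SPImp Unit :=
  (((SP.var 0).d).and ((SP.var 1).d), ((SP.var 0).and (SP.var 1)).d)

/-!
The axiom `e_fun` says that `◇` preserves binary meets, so that the preimage under `◇` of a filter
is a filter as soon as it is nonempty. Letting that preimage be the only successor of a filter
gives a functional relation on filters, and `◇a` belongs to a filter exactly when the filter has a
successor containing `a`. Sending each element to the set of filters containing it is thus an
sp-embedding; principal filters make it injective.
-/

open Order

/-- The functionality axiom `◇_r p ∧ ◇_r q → ◇_r (p ∧ q)` for a modality `r` of an arbitrary
signature; `e_fun` is its only instance in the unimodal signature. -/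
def e_funAt {Sig : Type} (r : Sig) : SPImp Sig :=
  (((SP.var 0).dia r).and ((SP.var 1).dia r), ((SP.var 0).and (SP.var 1)).dia r)

theorem isPFilter_preimage {α β : Type*} [SemilatticeInf α] [SemilatticeInf β]
    (f : InfHom α β) (F : PFilter β) (hne : (f ⁻¹' F).Nonempty) :
    IsPFilter (f ⁻¹' (F : Set β)) := by
  refine .of_def hne (fun a ha b hb ↦ ⟨a ⊓ b, ?_, inf_le_left, inf_le_right⟩)
    fun hab ha ↦ F.mem_of_le (OrderHomClass.mono f hab) ha
  simpa only [Set.mem_preimage, map_inf, SetLike.mem_coe, PFilter.inf_mem_iff] using ⟨ha, hb⟩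

theorem KFrame.valid_e_funAt_iff_rightUnique {Sig : Type} {F : KFrame Sig} {r : Sig} :
    F.Valid (e_funAt r) ↔ Relator.RightUnique (F.rel r) := by
  constructor
  · intro hF x y z hxy hxz
    obtain ⟨_, -, rfl, rfl⟩ := hF (fun n ↦ if n = 0 then {y} else {z}) x
      ⟨⟨y, hxy, rfl⟩, ⟨z, hxz, rfl⟩⟩
    rfl
  · rintro hF v x ⟨⟨y, hxy, hy⟩, ⟨z, hxz, hz⟩⟩
    obtain rfl := hF hxy hxz
    exact ⟨y, hxy, hy, hz⟩

namespace SLO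

variable {Sig : Type} {A : SLO Sig} {r : Sig}

theorem valid_e_funAt_iff_map_inf :
    A.Valid (e_funAt r) ↔ ∀ a b, A.dia r (a ⊓ b) = A.dia r a ⊓ A.dia r b := by
  constructor
  · intro hA a b
    exact le_antisymm ((A.mono r).map_inf_le a b) (hA fun n ↦ if n = 0 then a else b)
  · intro hA v
    exact (hA (v 0) (v 1)).ge

theorem isPFilter_preimage_dia (hA : A.Valid (e_funAt r)) {x : PFilter A.carrier}
    {a : A.carrier} (ha : A.dia r a ∈ x) : IsPFilter (A.dia r ⁻¹' (x : Set A.carrier)) :=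
  isPFilter_preimage ⟨A.dia r, valid_e_funAt_iff_map_inf.1 hA⟩ x ⟨a, ha⟩

/-- The filter frame of a SLO, a functional counterpart of the canonical frame: its worlds are
the filters, and the only possible `r`-successor of `x` is the preimage of `x` under `◇_r`. This
preimage may fail to be a filter; in particular, `x` has no successor when it is empty. -/
def filterFrame (A : SLO Sig) : KFrame Sig where
  world := PFilter A.carrier
  rel r x y := (y : Set A.carrier) = A.dia r ⁻¹' x

theorem rightUnique_filterFrame_rel (A : SLO Sig) (r : Sig) :
    Relator.RightUnique (A.filterFrame.rel r) :=
  fun _ _ _ hxy hxz ↦ PFilter.ext _ _ (hxy.trans hxz.symm)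

/-- The representation map of a SLO in the complex algebra of its filter frame, sending an
element to the set of filters containing it. -/
def filterEmbedding (A : SLO Sig) (a : A.carrier) : A.filterFrame.cmpl.carrier :=
  {x : PFilter A.carrier | a ∈ x}

theorem filterEmbedding_injective (A : SLO Sig) : Function.Injective A.filterEmbedding := by
  intro a b hab
  have mem_iff (x : PFilter A.carrier) : a ∈ x ↔ b ∈ x := Set.ext_iff.1 hab x
  exact le_antisymm ((mem_iff (.principal a)).1 le_rfl) ((mem_iff (.principal b)).2 le_rfl)

theorem filterEmbedding_top (A : SLO Sig) : A.filterEmbedding ⊤ = ⊤ :=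
  Set.eq_univ_of_forall fun _ ↦ PFilter.top_mem

theorem filterEmbedding_inf (A : SLO Sig) (a b : A.carrier) :
    A.filterEmbedding (a ⊓ b) = A.filterEmbedding a ⊓ A.filterEmbedding b :=
  Set.ext fun _ ↦ PFilter.inf_mem_iff

theorem filterEmbedding_dia (hA : A.Valid (e_funAt r)) (a : A.carrier) :
    A.filterEmbedding (A.dia r a) = A.filterFrame.cmpl.dia r (A.filterEmbedding a) := by
  refine Set.ext fun (x : PFilter A.carrier) ↦ ⟨fun (ha : A.dia r a ∈ x) ↦ ?_, ?_⟩
  · exact ⟨(isPFilter_preimage_dia hA ha).toPFilter, ha, rfl⟩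
  · rintro ⟨y, hay, hxy⟩
    exact hxy.subset hay

theorem isSpEmbedding_filterEmbedding (hA : ∀ r, A.Valid (e_funAt r)) :
    IsSpEmbedding A A.filterFrame.cmpl A.filterEmbedding :=
  ⟨A.filterEmbedding_injective, A.filterEmbedding_top, A.filterEmbedding_inf,
    fun r ↦ filterEmbedding_dia (hA r)⟩

end SLO

theorem stmt8_general {Sig : Type} (A : SLO Sig) (hA : ∀ r, A.Valid (e_funAt r)) :
    ∃ F : KFrame Sig,
      (∀ r, Relator.RightUnique (F.rel r)) ∧
      (∀ r, F.Valid (e_funAt r)) ∧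
      ∃ η : A.carrier → F.cmpl.carrier, IsSpEmbedding A F.cmpl η :=
  ⟨A.filterFrame, A.rightUnique_filterFrame_rel,
    fun r ↦ KFrame.valid_e_funAt_iff_rightUnique.2 (A.rightUnique_filterFrame_rel r),
    A.filterEmbedding, SLO.isSpEmbedding_filterEmbedding hA⟩

/-- The unimodal spi-logic axiomatised by `{e_fun}` is complex:
every SLO validating `e_fun` sp-embeds into `F*` for some frame `F` with a
functional relation (equivalently, some frame validating `e_fun`). -/
theorem stmt8 (A : SLO Unit) (hA : A.Valid e_fun) :
    ∃ F : KFrame Unit,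
      (∀ x y z : F.world, F.rel () x y → F.rel () x z → y = z) ∧
      F.Valid e_fun ∧
      ∃ η : A.carrier → (KFrame.cmpl F).carrier, IsSpEmbedding A (KFrame.cmpl F) η := by
  obtain ⟨F, hfun, hvalid, hη⟩ := stmt8_general A fun _ ↦ hA
  exact ⟨F, fun _ _ _ hxy hxz ↦ hfun () hxy hxz, hvalid (), hη⟩
end

section
/- The unimodal spi-logic axiomatised by Ec_qo ∪ {e_fun} = {p → ◇p, ◇◇p → ◇p, ◇p ∧ ◇q → ◇(p ∧ q)} is not complete: every frame validating these three sp-implications validates ◇p → p (so Ec_qo ∪ {e_fun} ⊨_Kr ◇p → p), yet there is a (three-element) SLO validating all three that does not validate ◇p → p (so Ec_qo ∪ {e_fun} ⊭_SLO ◇p → p). -/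
/-- `◇p → p`. -/
def e_dp : SPImp Unit := ((SP.var 0).d, SP.var 0)

/-!
On frames, `e_refl` says that every point sees itself and `e_fun` that it sees at most one point, so
each point sees exactly itself and `◇p → p` holds. On a chain, by contrast, every monotone operator
preserves binary meets, so `e_fun` comes for free and any closure operator is a model of the three
axioms. It validates `◇p → p` only if it is the identity; a chain of three elements carries
a non-identity closure operator that even fixes the bottom.
-/

namespace KFrame

variable {F : KFrame Unit}

theorem valid_e_refl_iff : F.Valid e_refl ↔ ∀ w, F.rel () w w := by
  refine ⟨fun h w => ?_, fun h v w hw => ⟨w, h w, hw⟩⟩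
  obtain ⟨u, hwu, rfl⟩ := h (fun _ => {w}) w rfl
  exact hwu

theorem valid_e_fun_iff : F.Valid e_fun ↔ Relator.RightUnique (F.rel ()) := by
  constructor
  · intro h w u u' hu hu'
    let v : ℕ → Set F.world
      | 0 => {u}
      | _ => {u'}
    obtain ⟨x, -, (hxu : x = u), (hxu' : x = u')⟩ := h v w ⟨⟨u, hu, rfl⟩, ⟨u', hu', rfl⟩⟩
    exact hxu.symm.trans hxu'
  · rintro h v w ⟨⟨u, hu, hp⟩, ⟨u', hu', hq⟩⟩
    obtain rfl := h hu hu'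
    exact ⟨u, hu, hp, hq⟩

theorem valid_e_dp_iff : F.Valid e_dp ↔ ∀ w u, F.rel () w u → w = u := by
  refine ⟨fun h w u hwu => h (fun _ => {u}) w ⟨u, hwu, rfl⟩, ?_⟩
  rintro h v w ⟨u, hwu, hu⟩
  exact h w u hwu ▸ hu

theorem valid_e_dp_of_valid_e_refl_of_valid_e_fun (hrefl : F.Valid e_refl)
    (hfun : F.Valid e_fun) : F.Valid e_dp :=
  valid_e_dp_iff.2 fun w _ hwu =>
    valid_e_fun_iff.1 hfun (valid_e_refl_iff.1 hrefl w) hwu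

end KFrame

namespace SLO

section Correspondence

variable {A : SLO Unit}

theorem valid_e_refl_iff : A.Valid e_refl ↔ ∀ a, a ≤ A.dia () a :=
  ⟨fun h a => h fun _ => a, fun h v => h (v 0)⟩

theorem valid_e_trans_iff : A.Valid e_trans ↔ ∀ a, A.dia () (A.dia () a) ≤ A.dia () a :=
  ⟨fun h a => h fun _ => a, fun h v => h (v 0)⟩

theorem valid_e_fun_iff :
    A.Valid e_fun ↔ ∀ a b, A.dia () a ⊓ A.dia () b ≤ A.dia () (a ⊓ b) :=
  ⟨fun h a b => h fun | 0 => a | _ => b, fun h v => h (v 0) (v 1)⟩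

theorem valid_e_dp_iff : A.Valid e_dp ↔ ∀ a, A.dia () a ≤ a :=
  ⟨fun h a => h fun _ => a, fun h v => h (v 0)⟩

end Correspondence

/-- The unimodal SLO whose diamond is a given closure operator; such SLOs are the models of
`e_refl` and `e_trans`. -/
def ofClosureOperator {α : Type} [SemilatticeInf α] [OrderTop α] (c : ClosureOperator α) :
    SLO Unit where
  carrier := α
  dia _ := c
  mono _ := c.monotone

section SemilatticeInf

variable {α : Type} [SemilatticeInf α] [OrderTop α] (c : ClosureOperator α)

theorem ofClosureOperator_valid_e_refl : (ofClosureOperator c).Valid e_refl :=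
  valid_e_refl_iff.2 c.le_closure

theorem ofClosureOperator_valid_e_trans : (ofClosureOperator c).Valid e_trans :=
  valid_e_trans_iff.2 fun a => (c.idempotent a).le

theorem ofClosureOperator_valid_e_dp_iff :
    (ofClosureOperator c).Valid e_dp ↔ ∀ a, c.IsClosed a :=
  valid_e_dp_iff.trans <| forall_congr' fun _ => c.isClosed_iff_closure_le.symm

end SemilatticeInf

theorem ofClosureOperator_valid_e_fun {α : Type} [LinearOrder α] [OrderTop α]
    (c : ClosureOperator α) : (ofClosureOperator c).Valid e_fun :=
  valid_e_fun_iff.2 fun a b => (c.monotone.map_inf a b).ge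

end SLO

/-- The closure operator `0 ↦ 0`, `1 ↦ 2`, `2 ↦ 2` on the three-element chain, whose only
non-closed element is the middle one. It is the diamond of the SLO refuting `◇p → p`. -/
def threeChainClosure : ClosureOperator (Fin 3) :=
  .mk' ![0, 2, 2] (by unfold Monotone; decide) (by decide) (by decide)

theorem not_isClosed_threeChainClosure_one : ¬ threeChainClosure.IsClosed 1 := by
  rw [threeChainClosure.isClosed_iff]
  decide

/-- The unimodal spi-logic axiomatised by
`Ec_qo ∪ {e_fun} = {p → ◇p, ◇◇p → ◇p, ◇p ∧ ◇q → ◇(p ∧ q)}` is not complete: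
every frame validating these three sp-implications validates `◇p → p`,
yet there is a SLO validating all three that does not validate `◇p → p`. -/
theorem stmt9 :
    KrCons ({e_refl, e_trans, e_fun} : Set (SPImp Unit)) e_dp ∧
    (∃ A : SLO Unit, A.ValidSet ({e_refl, e_trans, e_fun} : Set (SPImp Unit)) ∧
      ¬ A.Valid e_dp) ∧
    ¬ SLOCons ({e_refl, e_trans, e_fun} : Set (SPImp Unit)) e_dp ∧
    ¬ IsCompleteLogic ({e_refl, e_trans, e_fun} : Set (SPImp Unit)) := by
  have hKr : KrCons {e_refl, e_trans, e_fun} e_dp := fun F hF =>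
    KFrame.valid_e_dp_of_valid_e_refl_of_valid_e_fun (hF e_refl (by simp)) (hF e_fun (by simp))
  let A := SLO.ofClosureOperator threeChainClosure
  have hA : A.ValidSet {e_refl, e_trans, e_fun} := by
    rintro ι (rfl | rfl | rfl)
    · exact SLO.ofClosureOperator_valid_e_refl _
    · exact SLO.ofClosureOperator_valid_e_trans _
    · exact SLO.ofClosureOperator_valid_e_fun _
  have hA_dp : ¬ A.Valid e_dp := fun h =>
    not_isClosed_threeChainClosure_one
      ((SLO.ofClosureOperator_valid_e_dp_iff threeChainClosure).1 h 1)
  have hSLO : ¬ SLOCons {e_refl, e_trans, e_fun} e_dp := fun h => hA_dp (h A hA)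
  exact ⟨hKr, ⟨A, hA, hA_dp⟩, hSLO, fun h => hSLO ((h e_dp).1 hKr)⟩
end

section
/- For every n ≥ 2, none of the unimodal spi-logics axiomatised by {e_funⁿ}, {e_refl, e_funⁿ}, {e_trans, e_funⁿ}, Ec_qo ∪ {e_funⁿ}, or Ec_equiv ∪ {e_funⁿ} is complex. In fact, there is a single finite SLO (with n+3 elements) validating every member of Ec_equiv ∪ {e_funⁿ} that admits no sp-embedding into F* for any frame F validating e_funⁿ. -/
/-- Conjunction of a list of variables (with a final `⊤`). -/
def conjVarsList : List ℕ → SP Unit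
  | [] => SP.top
  | n :: L => (SP.var n).and (conjVarsList L)

/-- The conjunction `⋀ Q` of a finite set of variables. -/
def conjVars (Q : Finset ℕ) : SP Unit := conjVarsList (Q.sort (· ≤ ·))

/-- Conjunction of a list of sp-formulas (with a final `⊤`). -/
def conjSP : List (SP Unit) → SP Unit
  | [] => SP.top
  | φ :: L => φ.and (conjSP L)

/-- `e_funⁿ`: the sp-implication
`⋀_{Q ⊆ {p₀,…,pₙ}, |Q| = n} ◇(⋀ Q) → ◇(p₀ ∧ ⋯ ∧ pₙ)`. -/
noncomputable def eFun (n : ℕ) : SPImp Unit :=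
  (conjSP ((((Finset.range (n + 1)).powersetCard n).toList).map fun Q => (conjVars Q).d),
   (conjVars (Finset.range (n + 1))).d)

/-!
The sets of points that are subsingletons or everything form a subalgebra of the complex algebra of
the frame with the full relation, so the resulting SLO validates `Ec_equiv`. It validates `e_funⁿ`
for `n ≥ 2` because such sets have Helly number two: the premise of `e_funⁿ` makes the values of
`p₀, …, pₙ` pairwise intersecting, hence they share a point. In this SLO every singleton `aᵢ`
satisfies `◇aᵢ = ⊤` although the `aᵢ` are pairwise disjoint. An embedding into `F*` therefore turns
`n + 1` singletons into `n + 1` distinct successors of one world, which refutes `e_funⁿ` on `F`.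
-/

namespace KFrame

section Truth

variable {F : KFrame Unit} {v : ℕ → Set F.world} {w : F.world} {n : ℕ}

theorem truth_conjVarsList {L : List ℕ} : F.truth v (conjVarsList L) w ↔ ∀ i ∈ L, w ∈ v i := by
  induction L with
  | nil => simp [conjVarsList, truth]
  | cons a L ih => simp [conjVarsList, truth, ih]

theorem truth_conjVars {Q : Finset ℕ} : F.truth v (conjVars Q) w ↔ ∀ i ∈ Q, w ∈ v i := by
  simp [conjVars, truth_conjVarsList]

theorem truth_conjSP {L : List (SP Unit)} : F.truth v (conjSP L) w ↔ ∀ φ ∈ L, F.truth v φ w := by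
  induction L with
  | nil => simp [conjSP, truth]
  | cons a L ih => simp [conjSP, truth, ih]

theorem truth_d_conjVars {Q : Finset ℕ} :
    F.truth v (conjVars Q).d w ↔ ∃ u, F.rel () w u ∧ ∀ i ∈ Q, u ∈ v i :=
  exists_congr fun _ => and_congr_right fun _ => truth_conjVars

-- An `n`-element subset of `{p₀, …, pₙ}` is the complement of a single variable `pₖ`.
theorem truth_eFun_fst :
    F.truth v (eFun n).1 w ↔
      ∀ k : Fin (n + 1), ∃ u, F.rel () w u ∧ ∀ i : Fin (n + 1), i ≠ k → u ∈ v i := by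
  simp only [eFun, truth_conjSP, List.forall_mem_map, Finset.mem_toList, truth_d_conjVars]
  refine ⟨fun h k => ?_, fun h Q hQ => ?_⟩
  · obtain ⟨u, hwu, hu⟩ := h ((Finset.range (n + 1)).erase k) <| Finset.mem_powersetCard.2
      ⟨Finset.erase_subset _ _, by simp [k.is_le]⟩
    exact ⟨u, hwu, fun i hik =>
      hu i (Finset.mem_erase.2 ⟨Fin.val_ne_of_ne hik, Finset.mem_range.2 i.isLt⟩)⟩
  · obtain ⟨hQ_sub, hQ_card⟩ := Finset.mem_powersetCard.1 hQ
    obtain ⟨k, hk, hkQ⟩ : ∃ k ∈ Finset.range (n + 1), k ∉ Q :=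
      Finset.exists_mem_notMem_of_card_lt_card (by simp [hQ_card])
    obtain ⟨u, hwu, hu⟩ := h ⟨k, Finset.mem_range.1 hk⟩
    exact ⟨u, hwu, fun i hi => hu ⟨i, Finset.mem_range.1 (hQ_sub hi)⟩
      fun hik => hkQ (Fin.mk.inj hik ▸ hi)⟩

theorem truth_eFun_snd :
    F.truth v (eFun n).2 w ↔ ∃ u, F.rel () w u ∧ ∀ i : Fin (n + 1), u ∈ v i := by
  simp only [eFun, truth_d_conjVars, Finset.mem_range, Fin.forall_iff]

end Truth

section Correspondence

variable {F : KFrame Unit}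

theorem valid_e_refl (h : ∀ w, F.rel () w w) : F.Valid e_refl :=
  fun _ w hw => ⟨w, h w, hw⟩

theorem valid_e_trans (h : ∀ w u x, F.rel () w u → F.rel () u x → F.rel () w x) :
    F.Valid e_trans :=
  fun _ w ⟨u, hwu, x, hux, hx⟩ => ⟨x, h w u x hwu hux, hx⟩

theorem valid_e_sym (h : ∀ w u, F.rel () w u → F.rel () u w) : F.Valid e_sym :=
  fun _ w ⟨hw, u, hwu, hu⟩ => ⟨u, hwu, hu, w, h w u hwu, hw⟩

theorem not_injective_of_valid_eFun {n : ℕ} (hF : F.Valid (eFun n)) {w : F.world}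
    {u : Fin (n + 1) → F.world} (hwu : ∀ i, F.rel () w (u i)) : ¬ Function.Injective u := by
  intro hu
  let v : ℕ → Set F.world := fun i => u '' {j | (j : ℕ) ≠ i}
  have premise : F.truth v (eFun n).1 w := truth_eFun_fst.2 fun k =>
    ⟨u k, hwu k, fun i hik => ⟨k, Fin.val_ne_of_ne hik.symm, rfl⟩⟩
  obtain ⟨x, -, hx⟩ := truth_eFun_snd.1 (hF v w premise)
  obtain ⟨j, -, rfl⟩ := hx 0
  obtain ⟨k, hkj, huk⟩ := hx j
  exact hkj (congrArg Fin.val (hu huk))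

end Correspondence

theorem eval_cmpl {Sig : Type} (F : KFrame Sig) (v : ℕ → Set F.world) (φ : SP Sig) :
    F.cmpl.eval v φ = {w | F.truth v φ w} := by
  induction φ with
  | var i => rfl
  | top => rfl
  | and φ ψ ihφ ihψ => exact congrArg₂ (· ⊓ ·) ihφ ihψ
  | dia r φ ih =>
    refine (congrArg (F.cmpl.dia r) ih).trans (Set.ext fun w => ?_)
    exact exists_congr fun u => and_comm

theorem eval_cmpl_le_iff {Sig : Type} (F : KFrame Sig) {v : ℕ → Set F.world} {φ ψ : SP Sig} :
    F.cmpl.eval v φ ≤ F.cmpl.eval v ψ ↔ ∀ w, F.truth v φ w → F.truth v ψ w := by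
  rw [eval_cmpl, eval_cmpl]
  rfl

/-- The frame on `W` in which every world sees every world. -/
def full (Sig W : Type) [Nonempty W] : KFrame Sig where
  world := W
  rel _ _ _ := True

end KFrame

namespace SLO

variable {Sig : Type}

/-- A subalgebra of a SLO: a set of elements closed under `⊤`, binary meets and the operators. -/
structure IsSubalgebra (A : SLO Sig) (S : Set A.carrier) : Prop where
  top_mem : ⊤ ∈ S
  inf_mem : ∀ ⦃a b⦄, a ∈ S → b ∈ S → a ⊓ b ∈ S
  dia_mem : ∀ (r : Sig) ⦃a⦄, a ∈ S → A.dia r a ∈ S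

/-- The SLO that a subalgebra `S` of `A` carries. -/
def restrict (A : SLO Sig) {S : Set A.carrier} (hS : A.IsSubalgebra S) : SLO Sig where
  carrier := S
  instInf := Subtype.semilatticeInf hS.inf_mem
  instTop := Subtype.orderTop hS.top_mem
  dia r a := ⟨A.dia r a, hS.dia_mem r a.2⟩
  mono r _ _ hab := A.mono r hab

theorem coe_eval_restrict {A : SLO Sig} {S : Set A.carrier} (hS : A.IsSubalgebra S)
    (v : ℕ → S) (φ : SP Sig) :
    ((A.restrict hS).eval v φ).1 = A.eval (fun i => (v i : A.carrier)) φ := by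
  induction φ with
  | var i => rfl
  | top => rfl
  | and φ ψ ihφ ihψ => exact congrArg₂ (· ⊓ ·) ihφ ihψ
  | dia r φ ih => exact congrArg (A.dia r) ih

theorem valid_restrict_iff {A : SLO Sig} {S : Set A.carrier} (hS : A.IsSubalgebra S)
    {ι : SPImp Sig} :
    (A.restrict hS).Valid ι ↔
      ∀ v : ℕ → A.carrier, (∀ i, v i ∈ S) → A.eval v ι.1 ≤ A.eval v ι.2 := by
  have eval_le_iff (v : ℕ → S) :
      (A.restrict hS).eval v ι.1 ≤ (A.restrict hS).eval v ι.2 ↔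
        A.eval (fun i => v i) ι.1 ≤ A.eval (fun i => v i) ι.2 := by
    rw [← coe_eval_restrict hS, ← coe_eval_restrict hS]
    rfl
  exact ⟨fun h v hv => (eval_le_iff fun i => ⟨v i, hv i⟩).1 (h _),
    fun h v => (eval_le_iff v).2 (h _ fun i => (v i).2)⟩

theorem valid_restrict_cmpl_iff {F : KFrame Sig} {S : Set (Set F.world)}
    (hS : F.cmpl.IsSubalgebra S) {ι : SPImp Sig} :
    (F.cmpl.restrict hS).Valid ι ↔
      ∀ v : ℕ → Set F.world, (∀ i, v i ∈ S) → ∀ w, F.truth v ι.1 w → F.truth v ι.2 w :=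
  (valid_restrict_iff hS).trans <| forall₂_congr fun _ _ => F.eval_cmpl_le_iff

theorem valid_restrict_cmpl_of_valid {F : KFrame Sig} {S : Set (Set F.world)}
    (hS : F.cmpl.IsSubalgebra S) {ι : SPImp Sig} (hι : F.Valid ι) :
    (F.cmpl.restrict hS).Valid ι :=
  (valid_restrict_cmpl_iff hS).2 fun v _ => hι v

end SLO

namespace IsSpEmbedding

theorem le_iff_le {Sig : Type} {A B : SLO Sig} {η : A.carrier → B.carrier}
    (hη : IsSpEmbedding A B η) {a b : A.carrier} : η a ≤ η b ↔ a ≤ b := by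
  obtain ⟨hinj, -, hinf, -⟩ := hη
  rw [← inf_eq_left, ← hinf, hinj.eq_iff, inf_eq_left]

theorem not_valid_eFun {A : SLO Unit} {F : KFrame Unit} {η : A.carrier → Set F.world}
    (hη : IsSpEmbedding A F.cmpl η) {n : ℕ} {a : Fin (n + 1) → A.carrier} {b c : A.carrier}
    (hb : A.dia () b ≤ b) (hcb : ¬ c ≤ b) (hca : ∀ i, c ≤ A.dia () (a i))
    (hab : Pairwise fun i j => a i ⊓ a j ≤ b) : ¬ F.Valid (eFun n) := by
  intro hF
  have subset_iff {x y : A.carrier} : η x ⊆ η y ↔ x ≤ y := hη.le_iff_le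
  have map_inf (x y : A.carrier) : η (x ⊓ y) = η x ∩ η y := hη.2.2.1 x y
  have map_dia (x : A.carrier) : η (A.dia () x) = {w | ∃ u ∈ η x, F.rel () w u} := hη.2.2.2 () x
  obtain ⟨w, hwc, hwb⟩ : ∃ w ∈ η c, w ∉ η b := Set.not_subset.1 (subset_iff.not.2 hcb)
  have exists_succ (i) : ∃ u ∈ η (a i), F.rel () w u := by
    have hw : w ∈ η (A.dia () (a i)) := subset_iff.2 (hca i) hwc
    rwa [map_dia] at hw
  choose u hua hwu using exists_succ
  have hub (i) : u i ∉ η b := by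
    refine fun h => hwb (subset_iff.2 hb ?_)
    rw [map_dia]
    exact ⟨u i, h, hwu i⟩
  refine KFrame.not_injective_of_valid_eFun hF hwu fun i j hij => ?_
  by_contra hne
  refine hub i (subset_iff.2 (hab hne) ?_)
  rw [map_inf]
  exact ⟨hua i, hij ▸ hua j⟩

end IsSpEmbedding

/-- The subsets of `α` that have at most one element or are all of `α`. If `α` has at least two
points, they form under inclusion the lattice of height two whose atoms are the singletons. -/
def subsingletonOrUniv (α : Type*) : Set (Set α) :=
  {s | s.Subsingleton ∨ s = Set.univ}

section SubsingletonOrUniv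

variable {α : Type*}

theorem inter_mem_subsingletonOrUniv {s t : Set α} (hs : s ∈ subsingletonOrUniv α)
    (ht : t ∈ subsingletonOrUniv α) : s ∩ t ∈ subsingletonOrUniv α := by
  rcases hs with hs | rfl
  · exact .inl (hs.anti Set.inter_subset_left)
  · rwa [Set.univ_inter]

theorem nonempty_iInter_of_mem_subsingletonOrUniv [Nonempty α] {ι : Type*} {s : ι → Set α}
    (hs : ∀ i, s i ∈ subsingletonOrUniv α) (h : ∀ i j, (s i ∩ s j).Nonempty) :
    (⋂ i, s i).Nonempty := by
  by_cases huniv : ∀ i, s i = Set.univ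
  · simp [huniv]
  · obtain ⟨i, hi⟩ := not_forall.1 huniv
    have hsub : (s i).Subsingleton := (hs i).resolve_right hi
    obtain ⟨x, hx⟩ := (h i i).left
    refine ⟨x, Set.mem_iInter.2 fun j => ?_⟩
    obtain ⟨y, hyi, hyj⟩ := h i j
    rwa [hsub hx hyi]

theorem subsingletonOrUniv_eq_insert :
    subsingletonOrUniv α = insert ∅ (insert Set.univ (Set.range fun x => {x})) := by
  ext s
  simp only [subsingletonOrUniv, Set.mem_ofPred_eq, Set.mem_insert_iff, Set.mem_range,
    Set.subsingleton_iff_eq_empty_or_singleton]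
  grind

theorem ncard_subsingletonOrUniv [Finite α] [Nontrivial α] :
    (subsingletonOrUniv α).ncard = Nat.card α + 2 := by
  have univ_notMem : Set.univ ∉ Set.range fun x : α => ({x} : Set α) := by
    rintro ⟨x, hx⟩
    exact Set.singleton_ne_univ x hx
  have empty_notMem : ∅ ∉ insert Set.univ (Set.range fun x : α => ({x} : Set α)) := by
    simp [Set.empty_ne_univ]
  rw [subsingletonOrUniv_eq_insert, Set.ncard_insert_of_notMem empty_notMem,
    Set.ncard_insert_of_notMem univ_notMem, Set.ncard_range_of_injective Set.singleton_injective]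

end SubsingletonOrUniv

theorem isSubalgebra_subsingletonOrUniv (Sig : Type) {α : Type} [Nonempty α] :
    (KFrame.full Sig α).cmpl.IsSubalgebra (subsingletonOrUniv α) where
  top_mem := .inr rfl
  inf_mem _ _ := inter_mem_subsingletonOrUniv
  dia_mem r s _ := by
    rcases s.eq_empty_or_nonempty with rfl | ⟨x, hx⟩
    · exact .inl fun _ ⟨_, hu, _⟩ => hu.elim
    · exact .inr (Set.eq_univ_of_forall fun w => ⟨x, hx, trivial⟩)

/-- The SLO of the subsets of `α` that are subsingletons or everything, on which `◇` sends `∅` to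
`∅` and every nonempty set to `⊤`. It is obtained as a subalgebra of the complex algebra of the
full relation on `α`. -/
def flatSLO (α : Type) [Nonempty α] : SLO Unit :=
  (KFrame.full Unit α).cmpl.restrict (isSubalgebra_subsingletonOrUniv Unit)

theorem natCard_flatSLO {α : Type} [Finite α] [Nontrivial α] :
    Nat.card (flatSLO α).carrier = Nat.card α + 2 :=
  ncard_subsingletonOrUniv (α := α)

section FlatSLO

variable {α : Type} [Nonempty α] {n : ℕ}

theorem flatSLO_valid_eFun (hn : 2 ≤ n) : (flatSLO α).Valid (eFun n) := by
  refine (SLO.valid_restrict_cmpl_iff _).2 fun v hv w hw => ?_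
  rw [KFrame.truth_eFun_fst] at hw
  have pairwise_inter (i j : Fin (n + 1)) : (v i ∩ v j).Nonempty := by
    obtain ⟨k, hki, hkj⟩ := Fin.exists_ne_and_ne_of_two_lt i j (by lia)
    obtain ⟨u, -, hu⟩ := hw k
    exact ⟨u, hu i hki.symm, hu j hkj.symm⟩
  obtain ⟨u, hu⟩ := nonempty_iInter_of_mem_subsingletonOrUniv (fun i : Fin (n + 1) => hv i)
    pairwise_inter
  exact KFrame.truth_eFun_snd.2 ⟨u, trivial, Set.mem_iInter.1 hu⟩

theorem flatSLO_validSet (hn : 2 ≤ n) :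
    (flatSLO α).ValidSet {e_refl, e_trans, e_sym, eFun n} := by
  rintro ι (rfl | rfl | rfl | rfl)
  · exact SLO.valid_restrict_cmpl_of_valid _ (KFrame.valid_e_refl fun _ => trivial)
  · exact SLO.valid_restrict_cmpl_of_valid _ (KFrame.valid_e_trans fun _ _ _ _ _ => trivial)
  · exact SLO.valid_restrict_cmpl_of_valid _ (KFrame.valid_e_sym fun _ _ _ => trivial)
  · exact flatSLO_valid_eFun hn

theorem not_isSpEmbedding_flatSLO (e : Fin (n + 1) ↪ α) {F : KFrame Unit}
    (hF : F.Valid (eFun n)) (η : (flatSLO α).carrier → Set F.world) :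
    ¬ IsSpEmbedding (flatSLO α) F.cmpl η := by
  intro hη
  let bottom : subsingletonOrUniv α := ⟨∅, .inl Set.subsingleton_empty⟩
  let atom (i : Fin (n + 1)) : subsingletonOrUniv α := ⟨{e i}, .inl Set.subsingleton_singleton⟩
  have dia_bottom : (flatSLO α).dia () bottom ≤ bottom := fun _ ⟨_, hu, _⟩ => hu
  have not_top_le_bottom : ¬ (⊤ : (flatSLO α).carrier) ≤ bottom := fun h =>
    h (Set.mem_univ (Classical.arbitrary α))
  have dia_atom (i) : ⊤ ≤ (flatSLO α).dia () (atom i) := fun w _ => ⟨e i, rfl, trivial⟩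
  refine hη.not_valid_eFun (a := atom) dia_bottom not_top_le_bottom dia_atom ?_ hF
  rintro i j hij x ⟨hxi, hxj⟩
  exact hij (e.injective (hxi.symm.trans hxj))

end FlatSLO

theorem not_isComplexLogic_of_subset {n : ℕ} (hn : 2 ≤ n) {Ax : Set (SPImp Unit)}
    (hAx : Ax ⊆ {e_refl, e_trans, e_sym, eFun n}) (hfun : eFun n ∈ Ax) : ¬ IsComplexLogic Ax := by
  intro h
  obtain ⟨F, hF, η, hη⟩ := h (flatSLO (Fin (n + 1))) fun ι hι => flatSLO_validSet hn ι (hAx hι)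
  exact not_isSpEmbedding_flatSLO (.refl _) (hF _ hfun) η hη

/-- For `n ≥ 2`, none of the unimodal spi-logics axiomatised by
`{e_funⁿ}`, `{e_refl, e_funⁿ}`, `{e_trans, e_funⁿ}`, `Ec_qo ∪ {e_funⁿ}` or
`Ec_equiv ∪ {e_funⁿ}` is complex. In fact, there is a single finite SLO with
`n + 3` elements validating every member of `Ec_equiv ∪ {e_funⁿ}` that admits no
sp-embedding into `F*` for any frame `F` validating `e_funⁿ`. -/
theorem stmt13 (n : ℕ) (hn : 2 ≤ n) :
    ¬ IsComplexLogic ({eFun n} : Set (SPImp Unit)) ∧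
    ¬ IsComplexLogic ({e_refl, eFun n} : Set (SPImp Unit)) ∧
    ¬ IsComplexLogic ({e_trans, eFun n} : Set (SPImp Unit)) ∧
    ¬ IsComplexLogic ({e_refl, e_trans, eFun n} : Set (SPImp Unit)) ∧
    ¬ IsComplexLogic ({e_refl, e_trans, e_sym, eFun n} : Set (SPImp Unit)) ∧
    ∃ A : SLO Unit, Finite A.carrier ∧ Nat.card A.carrier = n + 3 ∧
      A.ValidSet ({e_refl, e_trans, e_sym, eFun n} : Set (SPImp Unit)) ∧
      ∀ F : KFrame Unit, F.Valid (eFun n) →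
        ∀ η : A.carrier → (KFrame.cmpl F).carrier, ¬ IsSpEmbedding A (KFrame.cmpl F) η := by
  have : Nontrivial (Fin (n + 1)) := Fin.nontrivial_iff_two_le.2 (by lia)
  have card_flatSLO : Nat.card (flatSLO (Fin (n + 1))).carrier = n + 3 :=
    natCard_flatSLO.trans (by rw [Nat.card_fin])
  exact ⟨not_isComplexLogic_of_subset hn (by grind) (by simp),
    not_isComplexLogic_of_subset hn (by grind) (by simp),
    not_isComplexLogic_of_subset hn (by grind) (by simp),
    not_isComplexLogic_of_subset hn (by grind) (by simp),
    not_isComplexLogic_of_subset hn subset_rfl (by simp),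
    flatSLO (Fin (n + 1)), Nat.finite_of_card_ne_zero (by lia), card_flatSLO,
    flatSLO_validSet hn, fun _ => not_isSpEmbedding_flatSLO (.refl _)⟩
end
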